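/- Limsup rotation set bound: For lifts f̃, g̃ ∈ Homeo(ℝ², ℤ²) of torus homeomorphisms f, g, every limit point of the sets (1/n)·Rot(f̃ g̃ⁿ) (as n → ∞, in the Hausdorff topology) is contained in Rot(g̃); equivalently, for every ε > 0 there is N such that for all n ≥ N, (1/n)·Rot(f̃ g̃ⁿ) is contained in the ε-neighborhood of Rot(g̃). -/

import Mathlib

open Filter Pointwise

/-- `f` commutes with the integer translations of the plane. -/
def CommutesWithIntTranslations (f : ℝ × ℝ → ℝ × ℝ) : Prop :=
  ∀ (x : ℝ × ℝ) (p q : ℤ), f (x + ((p : ℝ), (q : ℝ))) = f x + ((p : ℝ), (q : ℝ))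

/-- The Misiurewicz–Ziemian rotation set of a lift `f`. -/
def RotSet (f : ℝ × ℝ → ℝ × ℝ) : Set (ℝ × ℝ) :=
  {v | ∃ (x : ℕ → ℝ × ℝ) (nk : ℕ → ℕ), Tendsto nk atTop atTop ∧
    Tendsto (fun k => ((nk k : ℝ))⁻¹ • (f^[nk k] (x k) - x k)) atTop (nhds v)}


lemma aux_log (f : ℝ × ℝ → ℂ) (hf : Continuous f) (h0 : ∀ x, f x ≠ 0) :
    ∃ L : ℝ × ℝ → ℂ, Continuous L ∧ ∀ x, Complex.exp (L x) = f x := by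
  obtain ⟨F, ⟨-, hF⟩, -⟩ := Complex.isCoveringMapOn_exp.existsUnique_continuousMap_lifts
    (⟨f, hf⟩ : C(ℝ × ℝ, ℂ)) (a₀ := 0) (e₀ := Complex.log (f 0)) (Complex.exp_log (h0 0))
    (fun a => h0 a)
  exact ⟨F, F.continuous, fun x => congrFun hF x⟩

lemma aux_turn (θ : ℝ → ℝ) (hθ : Continuous θ) (a b : ℝ) (hab : a ≤ b)
    (hs : ∀ t ∈ Set.Icc a b, 0 ≤ Real.sin (θ t)) (hc : Real.cos (θ a) = 1) :
    0 ≤ θ b - θ a ∧ θ b - θ a ≤ Real.pi := by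
  have hsa : Real.sin (θ a) = 0 := by
    have := Real.sin_sq_add_cos_sq (θ a)
    rw [hc] at this
    nlinarith
  have key : ∀ t ∈ Set.Icc a b, 0 ≤ Real.sin (θ t - θ a) := by
    intro t ht
    rw [Real.sin_sub, hc, hsa]
    simpa using hs t ht
  have hpi := Real.pi_pos
  have hcont : ContinuousOn (fun t => θ t - θ a) (Set.Icc a b) := by fun_prop
  constructor
  · by_contra h
    push Not at h
    have := intermediate_value_Icc' hab hcont
    obtain ⟨t, ht, hte⟩ := this (show max (θ b - θ a) (-(Real.pi/2)) ∈ _ from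
      ⟨le_max_left _ _, by simp only [sub_self]; exact max_le h.le (by linarith)⟩)
    have h1 := key t ht
    simp only at hte
    rw [hte] at h1
    have : Real.sin (max (θ b - θ a) (-(Real.pi/2))) < 0 :=
      Real.sin_neg_of_neg_of_neg_pi_lt (max_lt h (by linarith))
        (lt_of_lt_of_le (by linarith) (le_max_right _ _))
    linarith
  · by_contra h
    push Not at h
    have := intermediate_value_Icc hab hcont
    obtain ⟨t, ht, hte⟩ := this (show min (θ b - θ a) (3*Real.pi/2) ∈ _ from
      ⟨by simp only [sub_self]; exact le_min (by linarith) (by linarith), min_le_left _ _⟩)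
    have h1 := key t ht
    simp only at hte
    rw [hte] at h1
    have h2 : Real.pi < min (θ b - θ a) (3*Real.pi/2) := lt_min h (by linarith)
    have h3 : min (θ b - θ a) (3*Real.pi/2) ≤ 3*Real.pi/2 := min_le_right _ _
    have : 0 < Real.sin (min (θ b - θ a) (3*Real.pi/2) - Real.pi) :=
      Real.sin_pos_of_pos_of_lt_pi (by linarith) (by linarith)
    rw [Real.sin_sub_pi] at this
    linarith

lemma aux_cos_one (x y : ℝ) (hx : Real.cos x = 1) (hy : Real.cos y = 1)
    (h1 : 0 ≤ y - x) (h2 : y - x ≤ Real.pi) : y = x := by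
  have hsx : Real.sin x = 0 := by
    have := Real.sin_sq_add_cos_sq x
    rw [hx] at this
    nlinarith
  have : Real.cos (y - x) = Real.cos 0 := by rw [Real.cos_sub, hx, hy, hsx]; simp
  have := Real.injOn_cos ⟨h1, h2⟩ ⟨le_rfl, Real.pi_pos.le⟩ this
  linarith

lemma aux_cos_neg_one (x y : ℝ) (hx : Real.cos x = 1) (hy : Real.cos y = -1)
    (h1 : 0 ≤ y - x) (h2 : y - x ≤ Real.pi) : y = x + Real.pi := by
  have hsx : Real.sin x = 0 := by
    have := Real.sin_sq_add_cos_sq x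
    rw [hx] at this
    nlinarith
  have : Real.cos (y - x) = Real.cos Real.pi := by rw [Real.cos_sub, hx, hy, hsx]; simp
  have := Real.injOn_cos ⟨h1, h2⟩ ⟨Real.pi_pos.le, le_rfl⟩ this
  linarith

lemma aux_exp_pos (l w : ℂ) (h : Complex.exp l = w) (h0 : w.im = 0) (h1 : 0 < w.re) :
    Real.cos l.im = 1 := by
  subst h
  rw [Complex.exp_im] at h0
  rw [Complex.exp_re] at h1
  have e := Real.exp_pos l.re
  have hs : Real.sin l.im = 0 := by
    rcases mul_eq_zero.mp h0 with h | h
    · exact absurd h e.ne'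
    · exact h
  have hc : 0 < Real.cos l.im := pos_of_mul_pos_right h1 e.le
  have := Real.sin_sq_add_cos_sq l.im
  rw [hs] at this
  nlinarith

lemma aux_exp_neg (l w : ℂ) (h : Complex.exp l = w) (h0 : w.im = 0) (h1 : w.re < 0) :
    Real.cos l.im = -1 := by
  have := aux_exp_pos (l + Real.pi * Complex.I) (-w) (by rw [Complex.exp_add, h]; simp)
    (by simp [h0]) (by simpa using h1)
  simp at this
  linarith

lemma aux_exp_im (l w : ℂ) (h : Complex.exp l = w) (h0 : 0 ≤ w.im) : 0 ≤ Real.sin l.im := by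
  subst h
  rw [Complex.exp_im] at h0
  exact nonneg_of_mul_nonneg_right h0 (Real.exp_pos _)

lemma aux_exp_im' (l w : ℂ) (h : Complex.exp l = w) (h0 : w.im ≤ 0) : Real.sin l.im ≤ 0 := by
  have := aux_exp_im (l + Real.pi * Complex.I) (-w) (by rw [Complex.exp_add, h]; simp)
    (by simpa using h0)
  simp at this
  linarith

lemma aux_half (z : ℝ → ℂ) (hz : Continuous z) (hne : ∀ s t, z s - z t ≠ 1) (a b : ℝ)
    (hab : a ≤ b) (him : ∀ t ∈ Set.Icc a b, 0 ≤ (z t).im) (ha : (z a).im = 0)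
    (hb : (z b).im = 0) (hre : 1 < (z a).re - (z b).re) : False := by
  obtain ⟨L, hL, hexp⟩ := aux_log (fun p => z p.1 - z p.2 - 1) (by fun_prop)
    (fun p => sub_ne_zero.mpr (hne _ _))
  have hd : ∀ s, Real.cos ((L (s, s)).im) = -1 := fun s =>
    aux_exp_neg _ _ (hexp (s, s)) (by simp) (by simp)
  have hend : Real.cos ((L (a, b)).im) = 1 :=
    aux_exp_pos _ _ (hexp (a, b)) (by simp [ha, hb]) (by simp; linarith)
  -- diagonal
  have e1 : (L (b, b)).im + Real.pi = (L (a, a)).im + Real.pi := by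
    have := aux_turn (fun s => (L (s, s)).im + Real.pi) (by fun_prop) a b hab
      (fun t _ => by
        have := aux_exp_im' _ _ (hexp (t, t)) (by simp)
        rw [Real.sin_add_pi]; linarith) (by simp [hd])
    exact aux_cos_one _ _ (by simp [hd]) (by simp [hd]) this.1 this.2
  have e2 : (L (a, b)).im + Real.pi = (L (a, a)).im + Real.pi + Real.pi := by
    have := aux_turn (fun s => (L (a, s)).im + Real.pi) (by fun_prop) a b hab
      (fun t ht => by
        have := aux_exp_im' _ _ (hexp (a, t)) (by simp [ha, him t ht])
        rw [Real.sin_add_pi]; linarith) (by simp [hd])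
    exact aux_cos_neg_one _ _ (by simp [hd]) (by simp [hend]) this.1 this.2
  have e3 : (L (b, b)).im = (L (a, b)).im + Real.pi := by
    have := aux_turn (fun s => (L (s, b)).im) (by fun_prop) a b hab
      (fun t ht => aux_exp_im _ _ (hexp (t, b)) (by simp [hb, him t ht])) hend
    exact aux_cos_neg_one _ _ hend (hd b) this.1 this.2
  have := Real.pi_pos
  linarith

lemma aux_cross (z : ℝ → ℂ) (hz : Continuous z) (hne : ∀ s t, z s - z t ≠ 1) (a b : ℝ)
    (hab : a ≤ b) (ha : (z a).im = 0) (hb : (z b).im = 0) (hra : 1 ≤ (z a).re)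
    (hrb : (z b).re ≤ -1) (hgap : ∀ t, (z t).im = 0 → 1 ≤ |(z t).re|) : False := by
  have hre : Continuous (fun t => (z t).re) := by fun_prop
  have himc : Continuous (fun t => (z t).im) := by fun_prop
  obtain ⟨d, ⟨hd1, hd2, hd3⟩, hdl⟩ := IsCompact.exists_isLeast
    (s := Set.Icc a b ∩ {t | (z t).im = 0 ∧ (z t).re ≤ -1})
    (isCompact_Icc.inter_right
      ((isClosed_eq himc continuous_const).inter (isClosed_le hre continuous_const)))
    ⟨b, ⟨hab, le_rfl⟩, hb, hrb⟩
  obtain ⟨c, ⟨hc1, hc2, hc3⟩, hcl⟩ := IsCompact.exists_isGreatest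
    (s := Set.Icc a d ∩ {t | (z t).im = 0 ∧ 1 ≤ (z t).re})
    (isCompact_Icc.inter_right
      ((isClosed_eq himc continuous_const).inter (isClosed_le continuous_const hre)))
    ⟨a, ⟨le_rfl, hd1.1⟩, ha, hra⟩
  have hint : ∀ t, c < t → t < d → (z t).im ≠ 0 := by
    intro t h1 h2 h0
    rcases le_abs.mp (hgap t h0) with h | h
    · exact absurd (hcl ⟨⟨by linarith [hc1.1], h2.le⟩, h0, h⟩) (not_le.mpr h1)
    · exact absurd (hdl ⟨⟨by linarith [hc1.1], by linarith [hd1.2]⟩, h0, by linarith⟩)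
        (not_le.mpr h2)
  by_cases hp : ∀ t ∈ Set.Icc c d, 0 ≤ (z t).im
  · exact aux_half z hz hne c d hc1.2 hp hc2 hd2 (by linarith)
  by_cases hm : ∀ t ∈ Set.Icc c d, (z t).im ≤ 0
  · refine aux_half (fun t => (starRingEnd ℂ) (z t)) (Complex.continuous_conj.comp hz) ?_ c d hc1.2
      ?_ (by simp [hc2]) (by simp [hd2]) (by simp; linarith)
    · intro s t h
      rw [← map_sub] at h
      apply hne s t
      have := congrArg (starRingEnd ℂ) h
      simpa using this
    · intro t ht
      simpa using hm t ht
  push Not at hp hm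
  obtain ⟨x, hx, hx0⟩ := hp
  obtain ⟨y, hy, hy0⟩ := hm
  obtain ⟨t, ht, ht0⟩ := intermediate_value_uIcc (a := x) (b := y) (f := fun t => (z t).im)
    himc.continuousOn (show (0:ℝ) ∈ _ from Set.mem_uIcc.mpr (Or.inl ⟨hx0.le, hy0.le⟩))
  simp only at ht0
  have htm : t ∈ Set.Icc c d := Set.uIcc_subset_Icc hx hy ht
  have htx : t ≠ x := by rintro rfl; linarith
  have hty : t ≠ y := by rintro rfl; linarith
  have h1 : c < t := by
    rcases Set.mem_uIcc.mp ht with h | h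
    · exact lt_of_le_of_lt hx.1 (lt_of_le_of_ne h.1 htx.symm)
    · exact lt_of_le_of_lt hy.1 (lt_of_le_of_ne h.1 hty.symm)
  have h2 : t < d := by
    rcases Set.mem_uIcc.mp ht with h | h
    · exact lt_of_lt_of_le (lt_of_le_of_ne h.2 hty) hy.2
    · exact lt_of_lt_of_le (lt_of_le_of_ne h.2 htx) hx.2
  exact hint t h1 h2 ht0

lemma aux_first (z : ℝ → ℂ) (hz : Continuous z) (c a b : ℝ) (hab : a ≤ b) (hra : 0 < (z a).re)
    (hrb : (z b).re < 0) (hia : (z a).im < c)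
    (h0 : ∀ t ∈ Set.Icc a b, (z t).re = 0 → c < (z t).im) :
    ∃ t ∈ Set.Icc a b, (z t).im = c ∧ 0 < (z t).re := by
  have hre : Continuous (fun t => (z t).re) := by fun_prop
  have himc : Continuous (fun t => (z t).im) := by fun_prop
  obtain ⟨x, hx, hx0⟩ := intermediate_value_Icc' hab hre.continuousOn (show (0:ℝ) ∈ _ from
    ⟨hrb.le, hra.le⟩)
  obtain ⟨d, ⟨hd1, hd2⟩, hdl⟩ := IsCompact.exists_isLeast
    (s := Set.Icc a b ∩ {t | (z t).re = 0})
    (isCompact_Icc.inter_right (isClosed_eq hre continuous_const)) ⟨x, hx, hx0⟩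
  have hd3 := h0 d hd1 hd2
  obtain ⟨t, ht, htc⟩ := intermediate_value_Icc hd1.1 himc.continuousOn (show c ∈ _ from
    ⟨hia.le, hd3.le⟩)
  simp only at htc
  have htd : t < d := lt_of_le_of_ne ht.2 (by rintro rfl; linarith)
  have htb : t ∈ Set.Icc a b := ⟨ht.1, ht.2.trans hd1.2⟩
  refine ⟨t, htb, htc, ?_⟩
  by_contra hneg
  push Not at hneg
  obtain ⟨y, hy, hy0⟩ := intermediate_value_Icc' ht.1 hre.continuousOn (show (0:ℝ) ∈ _ from
    ⟨hneg, hra.le⟩)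
  have := hdl ⟨⟨hy.1, hy.2.trans htb.2⟩, hy0⟩
  linarith [hy.2]

lemma aux_path (z : ℝ → ℂ) (hz : Continuous z) (hne : ∀ s t, z s - z t ≠ 1) (R a b : ℝ)
    (hab : a ≤ b) (hR : 2 ≤ R) (hzR : ∀ t, R ≤ ‖z t‖) (hra : 0 < (z a).re)
    (hrb : (z b).re < 0) (hia : (z a).im < R / 2) (hib : (z b).im < R / 2)
    (h0 : ∀ t ∈ Set.Icc a b, (z t).re = 0 → 0 ≤ (z t).im) : False := by
  have hn : ∀ t, R ^ 2 ≤ (z t).re ^ 2 + (z t).im ^ 2 := by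
    intro t
    have h1 := Complex.sq_norm (z t)
    rw [Complex.normSq_apply] at h1
    nlinarith [hzR t]
  have h0' : ∀ t ∈ Set.Icc a b, (z t).re = 0 → R / 2 < (z t).im := by
    intro t ht h
    have h1 := h0 t ht h
    have h2 := hn t
    rw [h] at h2
    nlinarith
  obtain ⟨p, hp, hpi, hpr⟩ := aux_first z hz (R/2) a b hab hra hrb hia h0'
  obtain ⟨q, hq, hqi, hqr⟩ := aux_first (fun t => -(starRingEnd ℂ) (z (-t)))
    (by have := Complex.continuous_conj; fun_prop) (R/2) (-b) (-p) (by linarith [hp.2])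
    (by simpa using hrb) (by simpa using hpr) (by simpa using hib)
    (by
      intro t ht h
      simp at h ⊢
      exact h0' (-t) ⟨by linarith [ht.2, hp.1], by linarith [ht.1]⟩ h)
  simp at hqi hqr
  have hsq : ∀ t, (z t).im = R / 2 → 1 ≤ |(z t).re| := by
    intro t h
    have h2 := hn t
    rw [h] at h2
    rw [← one_le_sq_iff_one_le_abs]
    nlinarith
  refine aux_cross (fun t => z t - (R / 2 : ℝ) * Complex.I) (by fun_prop)
    (fun s t h => hne s t (by rw [← h]; ring)) p (-q) (by linarith [hq.2]) ?_ ?_ ?_ ?_ ?_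
  · simp [hpi]
  · simp [hqi]
  · have := hsq p hpi
    rw [abs_of_pos hpr] at this
    simpa using this
  · have := hsq (-q) hqi
    rw [abs_of_neg hqr] at this
    simp; linarith
  · intro t h
    have := hsq t (by simp at h; linarith)
    simpa using this

/-- existence of a path turning by exactly pi -/
lemma aux_turnpath (Γ : ℝ × ℝ → ℂ) (hΓ : Continuous Γ) (hnz : ∀ x, Γ x ≠ 0)
    (hconv : (0 : ℂ) ∈ convexHull ℝ (Set.range Γ)) :
    ∃ (σ : ℝ → ℝ × ℝ) (a b : ℝ) (u : ℂ) (r₁ r₂ : ℝ), Continuous σ ∧ a ≤ b ∧ ‖u‖ = 1 ∧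
      0 < r₁ ∧ 0 < r₂ ∧ Γ (σ a) = r₁ * u ∧ Γ (σ b) = - (r₂ * u) ∧
      ∀ t ∈ Set.Icc a b, 0 ≤ (Γ (σ t) * (starRingEnd ℂ) u).im := by
  obtain ⟨L, hL, hexp⟩ := aux_log Γ hΓ hnz
  have hpol : ∀ x (α : ℝ), Γ x * (starRingEnd ℂ) (Complex.exp (α * Complex.I)) =
      Real.exp (L x).re * Complex.exp (((L x).im - α : ℝ) * Complex.I) := by
    intro x α
    rw [← hexp, ← Complex.exp_conj, Complex.ofReal_exp, ← Complex.exp_add, ← Complex.exp_add]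
    congr 1
    apply Complex.ext <;> simp [sub_eq_add_neg]
  by_cases hex : ∃ x y, (L x).im + Real.pi ≤ (L y).im
  · obtain ⟨x, y, hxy⟩ := hex
    have hpi := Real.pi_pos
    let σ : ℝ → ℝ × ℝ := fun t => x + t • (y - x)
    have hσ : Continuous σ := by fun_prop
    have hσ0 : σ 0 = x := by simp [σ]
    have hσ1 : σ 1 = y := by simp [σ]
    have hθ : Continuous (fun t => (L (σ t)).im) := by fun_prop
    set α := (L x).im with hα
    obtain ⟨m, hm, hm0⟩ := intermediate_value_Icc zero_le_one hθ.continuousOn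
      (show α + Real.pi ∈ _ from ⟨by simp only [hσ0]; linarith, by simpa only [hσ1] using hxy⟩)
    obtain ⟨b, ⟨hb1, hb2⟩, hbl⟩ := IsCompact.exists_isLeast
      (s := Set.Icc 0 1 ∩ {t | (L (σ t)).im = α + Real.pi})
      (isCompact_Icc.inter_right (isClosed_eq hθ continuous_const)) ⟨m, hm, hm0⟩
    obtain ⟨a, ⟨ha1, ha2⟩, hal⟩ := IsCompact.exists_isGreatest
      (s := Set.Icc 0 b ∩ {t | (L (σ t)).im = α})
      (isCompact_Icc.inter_right (isClosed_eq hθ continuous_const))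
      ⟨0, ⟨le_rfl, hb1.1⟩, by simp [hσ0, hα]⟩
    simp only [Set.mem_ofPred_eq] at ha2 hb2
    have hpolar : ∀ x, Γ x = Real.exp (L x).re * Complex.exp ((L x).im * Complex.I) := by
      intro x
      have := hpol x 0
      simpa using this
    refine ⟨σ, a, b, Complex.exp (α * Complex.I), Real.exp (L (σ a)).re, Real.exp (L (σ b)).re,
      hσ, ha1.2, Complex.norm_exp_ofReal_mul_I _, Real.exp_pos _, Real.exp_pos _, ?_, ?_, ?_⟩
    · rw [hpolar, ha2]
    · rw [hpolar, hb2]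
      push_cast
      rw [add_mul, Complex.exp_add, Complex.exp_pi_mul_I]
      ring
    · intro t ht
      have hlo : α ≤ (L (σ t)).im := by
        by_contra h
        push Not at h
        obtain ⟨p, hp, hp0⟩ := intermediate_value_Icc ht.2 hθ.continuousOn
          (show α ∈ _ from ⟨h.le, by simp only [hb2]; linarith⟩)
        simp only at hp0
        have hpt : t ≠ p := by rintro rfl; linarith
        have h1 : t < p := lt_of_le_of_ne hp.1 hpt
        have := hal ⟨⟨by linarith [ha1.1, ht.1], hp.2⟩, hp0⟩
        linarith [ht.1]
      have hhi : (L (σ t)).im ≤ α + Real.pi := by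
        by_contra h
        push Not at h
        obtain ⟨p, hp, hp0⟩ := intermediate_value_Icc ht.1 hθ.continuousOn
          (show α + Real.pi ∈ _ from ⟨by simp only [ha2]; linarith, h.le⟩)
        simp only at hp0
        have hpt : p ≠ t := by rintro rfl; linarith
        have h1 : p < t := lt_of_le_of_ne hp.2 hpt
        have := hbl ⟨⟨by linarith [ha1.1, hp.1], by linarith [ht.2, hb1.2]⟩, hp0⟩
        linarith [ht.2]
      rw [hpol, Complex.im_ofReal_mul, Complex.exp_ofReal_mul_I_im]
      exact mul_nonneg (Real.exp_pos _).le
        (Real.sin_nonneg_of_nonneg_of_le_pi (by linarith) (by linarith))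
  · exfalso
    push Not at hex
    obtain ⟨ι, _, w, z, hw0, hw1, hz, hsum⟩ := mem_convexHull_iff_exists_fintype.mp hconv
    choose x hx using hz
    have hne : Nonempty ι := by
      by_contra h
      rw [not_nonempty_iff] at h
      simp at hw1
    obtain ⟨i, hi⟩ := Finite.exists_min (fun i => (L (x i)).im)
    obtain ⟨j, hj⟩ := Finite.exists_max (fun i => (L (x i)).im)
    set μ := ((L (x i)).im + (L (x j)).im) / 2 with hμ
    have hij := hex (x i) (x j)
    have hpos : ∀ k, 0 < (z k * (starRingEnd ℂ) (Complex.exp (μ * Complex.I))).re := by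
      intro k
      rw [← hx k, hpol, Complex.re_ofReal_mul, Complex.exp_ofReal_mul_I_re]
      refine mul_pos (Real.exp_pos _) (Real.cos_pos_of_mem_Ioo ⟨?_, ?_⟩)
      · linarith [hi k, hj k]
      · linarith [hi k, hj k]
    have h0 : ∑ k, w k * (z k * (starRingEnd ℂ) (Complex.exp (μ * Complex.I))).re = 0 := by
      have : ((∑ k, w k • z k) * (starRingEnd ℂ) (Complex.exp (μ * Complex.I))).re = 0 := by
        rw [hsum]; simp
      rw [Finset.sum_mul, Complex.re_sum] at this
      rw [← this]
      refine Finset.sum_congr rfl fun k _ => ?_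
      rw [Complex.real_smul, mul_assoc, Complex.re_ofReal_mul]
    have h1 := (Finset.sum_eq_zero_iff_of_nonneg
      (fun k _ => mul_nonneg (hw0 k) (hpos k).le)).mp h0
    have h2 : ∀ k, w k = 0 := fun k => by
      rcases mul_eq_zero.mp (h1 k (Finset.mem_univ k)) with h | h
      · exact h
      · exact absurd h (hpos k).ne'
    simp [h2] at hw1

lemma aux_main (Γ : ℝ × ℝ → ℂ) (hΓ : Continuous Γ) (M r Q : ℝ) (hr : 0 < r)
    (hM : ∀ x, ‖Γ x‖ ≤ M) (hrl : ∀ x, r ≤ ‖Γ x‖)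
    (hlat : ∀ x y (p q : ℤ), Γ x - Γ y = (p : ℂ) + q * Complex.I → p = 0 ∧ q = 0)
    (hQ1 : 2 * M / r + 1 < Q) (hQ2 : Q + 1 ≤ r / 2)
    (hconv : (0 : ℂ) ∈ convexHull ℝ (Set.range Γ)) : False := by
  have hnz : ∀ x, Γ x ≠ 0 := fun x h => by
    have := hrl x
    rw [h, norm_zero] at this
    linarith
  have hM0 : 0 ≤ M := (norm_nonneg _).trans (hM 0)
  have hQ1' : 1 < Q := by
    have : 0 ≤ 2 * M / r := by positivity
    linarith
  obtain ⟨σ, a, b, u, r₁, r₂, hσ, hab, hu, hr1, hr2, hΓa, hΓb, hup⟩ :=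
    aux_turnpath Γ hΓ hnz hconv
  set w : ℂ := (round (Q * u.re) : ℂ) + (round (Q * u.im)) * Complex.I with hw
  set e : ℂ := Q * u - w with he
  have he1 : ‖e‖ ≤ 1 := by
    refine (Complex.norm_le_abs_re_add_abs_im e).trans ?_
    have h1 := abs_sub_round (Q * u.re)
    have h2 := abs_sub_round (Q * u.im)
    have e1 : e.re = Q * u.re - round (Q * u.re) := by simp [he, hw]
    have e2 : e.im = Q * u.im - round (Q * u.im) := by simp [he, hw]
    rw [e1, e2]
    linarith
  have hwe : w = Q * u - e := by rw [he]; ring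
  have hQu : ‖(Q : ℂ) * u‖ = Q := by
    rw [norm_mul, hu, Complex.norm_real, Real.norm_of_nonneg (by linarith), mul_one]
  have hwlo : Q - 1 ≤ ‖w‖ := by
    have := norm_sub_norm_le ((Q : ℂ) * u) e
    rw [← hwe, hQu] at this
    linarith
  have hwhi : ‖w‖ ≤ Q + 1 := by
    have := norm_sub_le ((Q : ℂ) * u) e
    rw [← hwe, hQu] at this
    linarith
  have hwpos : 0 < ‖w‖ := by linarith
  have hw0 : w ≠ 0 := norm_pos_iff.mp hwpos
  -- u * conj w
  set k : ℂ := u * (starRingEnd ℂ) w with hk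
  have huu : u * (starRingEnd ℂ) u = 1 := by
    rw [Complex.mul_conj, Complex.normSq_eq_norm_sq, hu]; simp
  have hk' : k = Q - u * (starRingEnd ℂ) e := by
    rw [hk, hwe, map_sub, map_mul, Complex.conj_ofReal, mul_sub]
    linear_combination (Q : ℂ) * huu
  have hue : ‖u * (starRingEnd ℂ) e‖ ≤ 1 := by
    rw [norm_mul, hu, one_mul, Complex.norm_conj]; exact he1
  have hkre : 0 < k.re := by
    have := (abs_le.mp ((Complex.abs_re_le_norm _).trans hue)).2
    rw [hk', Complex.sub_re, Complex.ofReal_re]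
    linarith
  have hkim : |k.im| ≤ 1 := by
    have := (Complex.abs_im_le_norm _).trans hue
    rw [hk', Complex.sub_im, Complex.ofReal_im, zero_sub, abs_neg]
    exact this
  have hW : 0 < Complex.normSq w := Complex.normSq_pos.mpr hw0
  have huw : u / w = k * ((Complex.normSq w)⁻¹ : ℝ) := by
    rw [div_eq_mul_inv, Complex.inv_def, hk]
    ring
  have huwre : 0 < (u / w).re := by
    rw [huw, Complex.re_mul_ofReal]
    positivity
  have huwim : |(u / w).im| ≤ 1 / ‖w‖ ^ 2 := by
    rw [huw, Complex.im_mul_ofReal, Complex.normSq_eq_norm_sq, abs_mul, abs_of_pos (by positivity : 0 < (‖w‖^2)⁻¹), one_div]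
    exact mul_le_of_le_one_left (by positivity) hkim
  have hr1M : r₁ ≤ M := by
    have := hM (σ a)
    rwa [hΓa, norm_mul, hu, Complex.norm_real, Real.norm_of_nonneg hr1.le, mul_one] at this
  have hr2M : r₂ ≤ M := by
    have := hM (σ b)
    rwa [hΓb, norm_neg, norm_mul, hu, Complex.norm_real, Real.norm_of_nonneg hr2.le, mul_one] at this
  have hsmall : M * (1 / ‖w‖ ^ 2) < r / ‖w‖ / 2 := by
    have h1 : 2 * M / r < ‖w‖ := by linarith
    rw [div_lt_iff₀ hr] at h1
    rw [mul_one_div, div_div, div_lt_div_iff₀ (by positivity) (by positivity)]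
    nlinarith
  have hbound : ∀ s, 0 < s → s ≤ M → |s * (u / w).im| < r / ‖w‖ / 2 := by
    intro s hs hsM
    rw [abs_mul, abs_of_pos hs]
    refine lt_of_le_of_lt ?_ hsmall
    exact mul_le_mul hsM huwim (abs_nonneg _) hM0
  have hza : Γ (σ a) / w = (r₁ : ℂ) * (u / w) := by rw [hΓa]; ring
  have hzb : Γ (σ b) / w = ((-r₂ : ℝ) : ℂ) * (u / w) := by rw [hΓb]; push_cast; ring
  refine aux_path (fun t => Γ (σ t) / w) (by fun_prop) ?_ (r / ‖w‖) a b hab ?_ ?_ ?_ ?_ ?_ ?_ ?_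
  · intro s t h
    rw [← sub_div, div_eq_one_iff_eq hw0, hw] at h
    obtain ⟨h1, h2⟩ := hlat _ _ _ _ h
    apply hw0
    rw [hw, h1, h2]; simp
  · rw [le_div_iff₀ hwpos]; linarith
  · intro t
    rw [norm_div]
    exact div_le_div_of_nonneg_right (hrl _) hwpos.le
  · simp only [hza, Complex.re_ofReal_mul]
    positivity
  · simp only [hzb, Complex.re_ofReal_mul]
    nlinarith
  · simp only [hza, Complex.im_ofReal_mul]
    exact (abs_lt.mp (hbound _ hr1 hr1M)).2
  · simp only [hzb, Complex.im_ofReal_mul]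
    have := (abs_lt.mp (hbound _ hr2 hr2M)).1
    linarith
  · intro t ht h0
    have h1 := hup t ht
    set z := Γ (σ t) / w with hz
    have hzi : z = (z.im : ℂ) * Complex.I := by
      apply Complex.ext <;> simp
      exact h0
    have h2 : Γ (σ t) * (starRingEnd ℂ) u = (z.im : ℂ) * (Complex.I * (starRingEnd ℂ) k) := by
      have : Γ (σ t) = z * w := by rw [hz]; field_simp
      rw [this, hk, map_mul, Complex.conj_conj]
      linear_combination (w * (starRingEnd ℂ) u) * hzi
    rw [h2, Complex.im_ofReal_mul] at h1
    simp at h1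
    exact nonneg_of_mul_nonneg_left h1 hkre

lemma aux_fract (h : ℝ × ℝ → ℝ × ℝ) (hc : CommutesWithIntTranslations h) (x : ℝ × ℝ) :
    h x - x = h (Int.fract x.1, Int.fract x.2) - (Int.fract x.1, Int.fract x.2) := by
  have := hc (Int.fract x.1, Int.fract x.2) ⌊x.1⌋ ⌊x.2⌋
  have e : ((Int.fract x.1, Int.fract x.2) : ℝ × ℝ) + ((⌊x.1⌋ : ℝ), (⌊x.2⌋ : ℝ)) = x := by
    ext <;> simp
  rw [e] at this
  rw [sub_eq_sub_iff_add_eq_add, this, add_assoc, add_comm (((⌊x.1⌋ : ℝ), (⌊x.2⌋ : ℝ)) : ℝ × ℝ), e]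

lemma aux_bdd (h : ℝ × ℝ → ℝ × ℝ) (hcont : Continuous h) (hc : CommutesWithIntTranslations h) :
    ∃ M : ℝ, 0 ≤ M ∧ ∀ x, ‖h x - x‖ ≤ M := by
  obtain ⟨C, hC⟩ := (isCompact_Icc (a := (0 : ℝ × ℝ)) (b := 1)).exists_bound_of_continuousOn
    (f := fun x => h x - x) (by fun_prop)
  have key : ∀ x, ‖h x - x‖ ≤ C := by
    intro x
    rw [aux_fract h hc x]
    exact hC _ ⟨⟨Int.fract_nonneg _, Int.fract_nonneg _⟩,
      ⟨(Int.fract_lt_one _).le, (Int.fract_lt_one _).le⟩⟩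
  exact ⟨C, (norm_nonneg _).trans (key 0), key⟩

lemma aux_iter_comm (h : ℝ × ℝ → ℝ × ℝ) (hc : CommutesWithIntTranslations h) (n : ℕ) :
    CommutesWithIntTranslations h^[n] := by
  induction n with
  | zero => intro x p q; rfl
  | succ n ih =>
    intro x p q
    rw [Function.iterate_succ_apply', Function.iterate_succ_apply', ih x p q, hc]

lemma aux_iter_bdd (h : ℝ × ℝ → ℝ × ℝ) (M : ℝ) (hM : ∀ x, ‖h x - x‖ ≤ M) (n : ℕ) (x : ℝ × ℝ) :
    ‖h^[n] x - x‖ ≤ n * M := by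
  induction n with
  | zero => simp
  | succ n ih =>
    rw [Function.iterate_succ_apply']
    have := norm_add_le (h (h^[n] x) - h^[n] x) (h^[n] x - x)
    rw [sub_add_sub_cancel] at this
    push_cast
    linarith [hM (h^[n] x)]

lemma aux_avg (h : ℝ × ℝ → ℝ × ℝ) (n : ℕ) (hn : n ≠ 0) (x : ℝ × ℝ) :
    ((n : ℝ))⁻¹ • (h^[n] x - x) ∈ convexHull ℝ (Set.range fun x => h x - x) := by
  have : h^[n] x - x = ∑ i ∈ Finset.range n, (h (h^[i] x) - h^[i] x) := by
    have := Finset.sum_range_sub (fun i => h^[i] x) n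
    simp only [Function.iterate_succ_apply', Function.iterate_zero, id] at this
    exact this.symm
  rw [this, Finset.smul_sum]
  refine (convex_convexHull ℝ _).sum_mem (fun i _ => by positivity) ?_
    (fun i _ => subset_convexHull ℝ _ ⟨_, rfl⟩)
  simp
  field_simp

lemma aux_disp (h : ℝ × ℝ → ℝ × ℝ) (hcont : Continuous h) (hinj : Function.Injective h)
    (hc : CommutesWithIntTranslations h) (D δ Q : ℝ) (hD : ∀ x, ‖h x - x‖ ≤ D) (hδ : 2 < δ)
    (hQ1 : 2 * (4 * D + 4) / (δ - 2) + 1 < Q) (hQ2 : Q + 1 ≤ (δ - 2) / 2) (p : ℝ × ℝ)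
    (hp : p ∈ convexHull ℝ (Set.range fun x => h x - x)) : ∃ x, ‖h x - x - p‖ ≤ δ := by
  by_contra hcon
  push Not at hcon
  let S : Set (ℝ × ℝ) := {x | (0 ≤ x.1 ∧ x.1 < 1) ∧ (0 ≤ x.2 ∧ x.2 < 1)}
  have hS : ∀ x ∈ S, ‖x‖ ≤ 1 := by
    rintro x ⟨h1, h2⟩
    rw [Prod.norm_def]
    exact max_le (by rw [Real.norm_of_nonneg h1.1]; exact h1.2.le)
      (by rw [Real.norm_of_nonneg h2.1]; exact h2.2.le)
  have hsub : (Set.range fun x => h x - x) ⊆ h '' S + Metric.closedBall 0 1 := by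
    rintro _ ⟨x, rfl⟩
    simp only
    rw [aux_fract h hc x, sub_eq_add_neg]
    have hxS : ((Int.fract x.1, Int.fract x.2) : ℝ × ℝ) ∈ S :=
      ⟨⟨Int.fract_nonneg _, Int.fract_lt_one _⟩, ⟨Int.fract_nonneg _, Int.fract_lt_one _⟩⟩
    refine Set.add_mem_add ⟨_, hxS, rfl⟩ ?_
    rw [mem_closedBall_zero_iff, norm_neg]
    exact hS _ hxS
  have hp2 := convexHull_mono hsub hp
  rw [convexHull_add, (convex_closedBall _ _).convexHull_eq] at hp2
  obtain ⟨p', hp', d, hd, rfl⟩ := hp2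
  rw [mem_closedBall_zero_iff] at hd
  have hhS : ∀ x, ‖x‖ ≤ 1 → ‖h x‖ ≤ D + 1 := by
    intro x hx
    have := norm_add_le (h x - x) x
    rw [sub_add_cancel] at this
    linarith [hD x]
  have hp'n : ‖p'‖ ≤ D + 1 := by
    have : convexHull ℝ (h '' S) ⊆ Metric.closedBall 0 (D + 1) := by
      refine convexHull_min ?_ (convex_closedBall _ _)
      rintro _ ⟨x, hx, rfl⟩
      rw [mem_closedBall_zero_iff]
      exact hhS x (hS x hx)
    have := this hp'
    rwa [mem_closedBall_zero_iff] at this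
  -- finitely many points
  obtain ⟨ι, _, w, z, hw0, hw1, hz, hsum⟩ := mem_convexHull_iff_exists_fintype.mp hp'
  choose x hxS hxz using hz
  have hne : Nonempty ι := by
    by_contra h
    rw [not_nonempty_iff] at h
    simp at hw1
  obtain ⟨j, hj⟩ := Finite.exists_max (fun i => max (x i).1 (x i).2)
  set l := max (x j).1 (x j).2 with hl
  have hl1 : l < 1 := max_lt (hxS j).1.2 (hxS j).2.2
  have hl0 : 0 ≤ l := le_max_of_le_left (hxS j).1.1
  let c : ℝ → ℝ := fun t => max 0 (min l t)
  have hcc : Continuous c := by fun_prop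
  have hc0 : ∀ t, 0 ≤ c t := fun t => le_max_left _ _
  have hcl : ∀ t, c t ≤ l := fun t => max_le hl0 (min_le_left _ _)
  have hcid : ∀ t, 0 ≤ t → t ≤ l → c t = t := by
    intro t h1 h2
    simp only [c]
    rw [min_eq_right h2, max_eq_right h1]
  let E := Complex.equivRealProdCLM.symm
  let cc : ℝ × ℝ → ℝ × ℝ := fun x => (c x.1, c x.2)
  have hccS : ∀ x, cc x ∈ S := fun x =>
    ⟨⟨hc0 _, (hcl _).trans_lt hl1⟩, ⟨hc0 _, (hcl _).trans_lt hl1⟩⟩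
  have hE1 : ∀ v : ℝ × ℝ, ‖v‖ ≤ ‖E v‖ := by
    intro v
    rw [Prod.norm_def]
    exact max_le (Complex.abs_re_le_norm (E v)) (Complex.abs_im_le_norm (E v))
  have hE2 : ∀ v : ℝ × ℝ, ‖E v‖ ≤ 2 * ‖v‖ := by
    intro v
    have h1 : |v.1| ≤ ‖v‖ := norm_fst_le v
    have h2 : |v.2| ≤ ‖v‖ := norm_snd_le v
    have := Complex.norm_le_abs_re_add_abs_im (E v)
    simp only [E, Complex.equivRealProdCLM_symm_apply_re, Complex.equivRealProdCLM_symm_apply_im] at this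
    simp only [E]
    linarith
  refine aux_main (fun y => E (h (cc y) - p')) (by fun_prop) (4 * D + 4) (δ - 2) Q (by linarith)
    ?_ ?_ ?_ hQ1 hQ2 ?_
  · intro y
    have h1 := hE2 (h (cc y) - p')
    have h2 := norm_sub_le (h (cc y)) p'
    have h3 := hhS _ (hS _ (hccS y))
    linarith
  · intro y
    refine le_trans ?_ (hE1 _)
    have h1 := hcon (cc y)
    have h2 : h (cc y) - cc y - (p' + d) = (h (cc y) - p') - (cc y + d) := by abel
    simp only at h1
    rw [h2] at h1
    have h3 := norm_sub_le (h (cc y) - p') (cc y + d)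
    have h4 := norm_add_le (cc y) d
    have h5 := hS _ (hccS y)
    linarith
  · intro y y' m k hmk
    rw [← map_sub, sub_sub_sub_cancel_right] at hmk
    have h1 : h (cc y) - h (cc y') = ((m : ℝ), (k : ℝ)) := by
      apply E.injective
      rw [hmk]
      apply Complex.ext <;> simp [E]
    have h2 : h (cc y) = h (cc y' + ((m : ℝ), (k : ℝ))) := by
      rw [hc, ← h1]; abel
    have h3 := hinj h2
    have h4 := hccS y
    have h5 := hccS y'
    rw [Prod.ext_iff] at h3
    simp only [Prod.fst_add, Prod.snd_add] at h3
    have a1 : (m : ℝ) < 1 := by linarith [h3.1, h4.1.2, h5.1.1]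
    have a2 : (-1 : ℝ) < m := by linarith [h3.1, h4.1.1, h5.1.2]
    have b1 : (k : ℝ) < 1 := by linarith [h3.2, h4.2.2, h5.2.1]
    have b2 : (-1 : ℝ) < k := by linarith [h3.2, h4.2.1, h5.2.2]
    norm_cast at a1 a2 b1 b2
    have a2' : (-1 : ℤ) < m := by exact_mod_cast a2
    have b2' : (-1 : ℤ) < k := by exact_mod_cast b2
    omega
  · refine mem_convexHull_of_exists_fintype w (fun i => E (z i - p')) hw0 hw1 ?_ ?_
    · intro i
      refine ⟨x i, ?_⟩
      have h1 : cc (x i) = x i := by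
        have := hj i
        simp only [cc]
        rw [hcid _ (hxS i).1.1 ((le_max_left _ _).trans this),
          hcid _ (hxS i).2.1 ((le_max_right _ _).trans this)]
      simp only
      rw [h1, hxz]
    · have : ∑ i, w i • E (z i - p') = E (∑ i, w i • (z i - p')) := by
        rw [map_sum]
        exact Finset.sum_congr rfl fun i _ => (map_smul E (w i) _).symm
      rw [this]
      simp only [smul_sub, Finset.sum_sub_distrib, hsum, ← Finset.sum_smul, hw1, one_smul, sub_self,
        map_zero]

lemma aux_near (g : ℝ × ℝ → ℝ × ℝ) (M : ℝ) (hM : ∀ x, ‖g x - x‖ ≤ M) (ε : ℝ) (hε : 0 < ε) :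
    ∃ N : ℕ, ∀ n ≥ N, ∀ x, ((n : ℝ))⁻¹ • (g^[n] x - x) ∈ Metric.thickening ε (RotSet g) := by
  by_contra hcon
  push Not at hcon
  choose n hn x hx using hcon
  have hM0 : 0 ≤ M := (norm_nonneg _).trans (hM 0)
  have hb : ∀ k, ((n k : ℝ))⁻¹ • (g^[n k] (x k) - x k) ∈ Metric.closedBall (0 : ℝ × ℝ) M := by
    intro k
    rw [mem_closedBall_zero_iff, norm_smul, norm_inv, Real.norm_natCast]
    have := aux_iter_bdd g M hM (n k) (x k)
    rcases Nat.eq_zero_or_pos (n k) with h | h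
    · rw [h]; simpa using hM0
    · have : (0 : ℝ) < n k := by exact_mod_cast h
      rw [inv_mul_le_iff₀ this]
      assumption
  obtain ⟨v, -, φ, hφ, hlim⟩ := (isCompact_closedBall (0 : ℝ × ℝ) M).tendsto_subseq hb
  have hv : v ∈ RotSet g := by
    refine ⟨fun k => x (φ k), fun k => n (φ k), ?_, hlim⟩
    exact (tendsto_atTop_mono hn tendsto_id).comp hφ.tendsto_atTop
  obtain ⟨k, hk⟩ := (hlim.eventually (Metric.ball_mem_nhds v hε)).exists
  exact hx (φ k) (Metric.mem_thickening_iff.mpr ⟨v, hv, hk⟩)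

/-- Limsup rotation set bound: for every `ε > 0`, for all large `n`, the scaled
rotation set `(1/n) • Rot(f ∘ gⁿ)` lies in the `ε`-neighborhood of `Rot(g)`. -/
theorem stmt12 (f g : ℝ × ℝ ≃ₜ ℝ × ℝ)
    (hf : CommutesWithIntTranslations ⇑f) (hg : CommutesWithIntTranslations ⇑g) :
    ∀ ε > (0 : ℝ), ∃ N : ℕ, ∀ n ≥ N,
      ((n : ℝ))⁻¹ • RotSet (⇑f ∘ (⇑g)^[n]) ⊆ Metric.thickening ε (RotSet ⇑g) := by
  intro ε hε
  obtain ⟨Mf, hMf0, hMf⟩ := aux_bdd f f.continuous hf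
  obtain ⟨M, hM0, hM⟩ := aux_bdd g g.continuous hg
  obtain ⟨N₁, hN₁⟩ := aux_near g M hM (ε / 4) (by linarith)
  set η := ε / 4 with hη
  have hη0 : 0 < η := by linarith
  set Q := 16 * (M + 1) / η + 2 with hQ
  obtain ⟨N₂, hN₂⟩ := exists_nat_ge (max (max (4 / η) (4 * (Q + 1) / η)) (max 1 ((Mf + 1) / η)))
  refine ⟨max N₁ N₂, fun n hn => ?_⟩
  have hnN : (N₂ : ℝ) ≤ n := by exact_mod_cast (le_max_right _ _).trans hn
  have hn1 : 4 / η ≤ n := ((le_max_left _ _).trans (le_max_left _ _)).trans (hN₂.trans hnN)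
  have hn2 : 4 * (Q + 1) / η ≤ n := ((le_max_right _ _).trans (le_max_left _ _)).trans (hN₂.trans hnN)
  have hn3 : (1 : ℝ) ≤ n := ((le_max_left _ _).trans (le_max_right _ _)).trans (hN₂.trans hnN)
  have hn4 : (Mf + 1) / η ≤ n := ((le_max_right _ _).trans (le_max_right _ _)).trans (hN₂.trans hnN)
  rw [div_le_iff₀ hη0] at hn1 hn2 hn4
  have hn0 : (0 : ℝ) < n := by linarith
  have hQpos : 2 ≤ Q := by
    have : 0 ≤ 16 * (M + 1) / η := by positivity
    linarith
  have hδ : 2 < n * η := by linarith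
  have hhalf : n * η / 2 ≤ n * η - 2 := by linarith
  rintro _ ⟨v, ⟨x, nk, hnk, hlim⟩, rfl⟩
  -- closeness of v
  obtain ⟨k, hk1, hk2⟩ := ((hlim.eventually (Metric.ball_mem_nhds v one_pos)).and
    (hnk.eventually_ge_atTop 1)).exists
  have hav := aux_avg (⇑f ∘ (⇑g)^[n]) (nk k) (by omega) (x k)
  set y := ((nk k : ℝ))⁻¹ • ((⇑f ∘ (⇑g)^[n])^[nk k] (x k) - x k) with hy
  have hsub : (Set.range fun x => (⇑f ∘ (⇑g)^[n]) x - x) ⊆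
      Metric.closedBall 0 Mf + Set.range fun x => (⇑g)^[n] x - x := by
    rintro _ ⟨x, rfl⟩
    refine ⟨f ((⇑g)^[n] x) - (⇑g)^[n] x, ?_, (⇑g)^[n] x - x, ⟨x, rfl⟩, ?_⟩
    · rw [mem_closedBall_zero_iff]; exact hMf _
    · simp
  have hav2 := convexHull_mono hsub hav
  rw [convexHull_add, (convex_closedBall _ _).convexHull_eq] at hav2
  obtain ⟨d, hd, p, hp, hdp⟩ := hav2
  rw [mem_closedBall_zero_iff] at hd
  simp only at hdp
  obtain ⟨q, hq⟩ := aux_disp ((⇑g)^[n]) (g.continuous.iterate n) (g.injective.iterate n)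
    (aux_iter_comm g hg n) (n * M) (n * η) Q (aux_iter_bdd g M hM n) hδ
    (by
      have h1 : 2 * (4 * (n * M) + 4) / (n * η - 2) ≤ 16 * (M + 1) / η := by
        rw [div_le_div_iff₀ (by linarith) hη0]
        have : 2 * (4 * (n * M) + 4) ≤ 8 * (M + 1) * n := by nlinarith
        have h2 : 16 * (M + 1) * (n * η / 2) ≤ 16 * (M + 1) * (n * η - 2) :=
          mul_le_mul_of_nonneg_left hhalf (by linarith)
        have h3 := mul_le_mul_of_nonneg_right this hη0.le
        linarith
      linarith)
    (by linarith) p hp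
  have hmem := hN₁ n ((le_max_left _ _).trans hn) q
  rw [Metric.mem_thickening_iff] at hmem ⊢
  obtain ⟨s, hs, hsd⟩ := hmem
  refine ⟨s, hs, ?_⟩
  have hd1 : ‖v - ((⇑g)^[n] q - q)‖ ≤ 1 + Mf + n * η := by
    have e : v - ((⇑g)^[n] q - q) = (v - y) + (d - ((⇑g)^[n] q - q - p)) := by
      rw [← hdp]; abel
    have h1 : ‖v - y‖ < 1 := by rw [← dist_eq_norm, dist_comm]; exact hk1
    rw [e]
    have h2 := norm_add_le (v - y) (d - ((⇑g)^[n] q - q - p))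
    have h3 := norm_sub_le d ((⇑g)^[n] q - q - p)
    linarith
  have hd2 : dist ((n : ℝ)⁻¹ • v) ((n : ℝ)⁻¹ • ((⇑g)^[n] q - q)) ≤ 2 * η := by
    rw [dist_eq_norm, ← smul_sub, norm_smul, norm_inv, Real.norm_natCast, inv_mul_le_iff₀ hn0]
    linarith
  have := dist_triangle ((n : ℝ)⁻¹ • v) ((n : ℝ)⁻¹ • ((⇑g)^[n] q - q)) s
  simp only
  linarith
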